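/- Let V be a simple b-module and suppose there exists t ∈ ℤ_+ such that (a) the action of L_t on V is injective, and (b) L_i V = 0 for all integers i > t. Then for every ℓ ∈ ℂ, the induced module Ind_ℓ(V) is a simple N-module. -/

import Mathlib

/-- A module over the Neveu–Schwarz algebra. `L m` is the action of `L_m`,
`G j` is the action of `G_{j - 1/2”}`, `C` is the action of the central element `c`. -/
structure NSRep : Type 1 where
  carrier : Type
  [isAddCommGroup : AddCommGroup carrier]
  [isModule : Module ℂ carrier]
  L : ℤ → carrier →ₗ[ℂ] carrier
  G : ℤ → carrier →ₗ[ℂ] carrier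
  C : carrier →ₗ[ℂ] carrier
  commC_L : ∀ (m : ℤ) (v : carrier), C (L m v) = L m (C v)
  commC_G : ∀ (j : ℤ) (v : carrier), C (G j v) = G j (C v)
  rel_LL : ∀ (m n : ℤ) (v : carrier),
    L m (L n v) - L n (L m v)
      = ((m : ℂ) - n) • L (m + n) v
        + (if m + n = 0 then ((m : ℂ) ^ 3 - m) / 12 else 0) • C v
  rel_LG : ∀ (m j : ℤ) (v : carrier),
    L m (G j v) - G j (L m v) = (((m : ℂ) - 2 * j + 1) / 2) • G (m + j) v
  rel_GG : ∀ (j k : ℤ) (v : carrier),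
    G j (G k v) + G k (G j v)
      = (2 : ℂ) • L (j + k - 1) v
        + (if j + k = 1 then ((j : ℂ) ^ 2 - j) / 3 else 0) • C v

attribute [instance] NSRep.isAddCommGroup NSRep.isModule

def NSRep.Invariant (M : NSRep) (p : Submodule ℂ M.carrier) : Prop :=
  (∀ (m : ℤ), ∀ v ∈ p, M.L m v ∈ p) ∧ (∀ (j : ℤ), ∀ v ∈ p, M.G j v ∈ p) ∧
    (∀ v ∈ p, M.C v ∈ p)

def NSRep.IsSimple (M : NSRep) : Prop :=
  (∃ v : M.carrier, v ≠ 0) ∧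
    ∀ p : Submodule ℂ M.carrier, M.Invariant p → p = ⊥ ∨ p = ⊤

def NSRep.IsRestricted (M : NSRep) : Prop :=
  ∀ v : M.carrier, ∃ N : ℤ, ∀ i : ℤ, N ≤ i → M.L i v = 0 ∧ M.G i v = 0

def NSRep.HasCentralCharge (M : NSRep) (ℓ : ℂ) : Prop :=
  ∀ v : M.carrier, M.C v = ℓ • v

/-- A module over the subalgebra `b = ⊕_{i ≥ 0} ℂ L_i ⊕ ⊕_{i ≥ 1} ℂ G_{i-1/2}`.
`L i` is the action of `L_i` and `G j` is the action of `G_{j + 1/2}`. -/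
structure BRep : Type 1 where
  carrier : Type
  [isAddCommGroup : AddCommGroup carrier]
  [isModule : Module ℂ carrier]
  L : ℕ → carrier →ₗ[ℂ] carrier
  G : ℕ → carrier →ₗ[ℂ] carrier
  rel_LL : ∀ (m n : ℕ) (v : carrier),
    L m (L n v) - L n (L m v) = ((m : ℂ) - n) • L (m + n) v
  rel_LG : ∀ (m j : ℕ) (v : carrier),
    L m (G j v) - G j (L m v) = (((m : ℂ) - 2 * j - 1) / 2) • G (m + j) v
  rel_GG : ∀ (j k : ℕ) (v : carrier),
    G j (G k v) + G k (G j v) = (2 : ℂ) • L (j + k + 1) v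

attribute [instance] BRep.isAddCommGroup BRep.isModule

def BRep.Invariant (V : BRep) (p : Submodule ℂ V.carrier) : Prop :=
  (∀ (i : ℕ), ∀ v ∈ p, V.L i v ∈ p) ∧ (∀ (j : ℕ), ∀ v ∈ p, V.G j v ∈ p)

def BRep.IsSimple (V : BRep) : Prop :=
  (∃ v : V.carrier, v ≠ 0) ∧
    ∀ p : Submodule ℂ V.carrier, V.Invariant p → p = ⊥ ∨ p = ⊤

/-- `ι` is a homomorphism of `b`-modules from the `b`-module `V` to the restriction
of the Neveu–Schwarz module `M` to `b` (under which `BRep.G j = G_{j+1/2}`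
corresponds to `NSRep.G (j+1)`). -/
def IsBLinear (V : BRep) (M : NSRep) (ι : V.carrier →ₗ[ℂ] M.carrier) : Prop :=
  (∀ (i : ℕ) (v : V.carrier), ι (V.L i v) = M.L (i : ℤ) (ι v)) ∧
    (∀ (j : ℕ) (v : V.carrier), ι (V.G j v) = M.G ((j : ℤ) + 1) (ι v))

def IsNSHom (M W : NSRep) (F : M.carrier →ₗ[ℂ] W.carrier) : Prop :=
  (∀ (m : ℤ) (v : M.carrier), F (M.L m v) = W.L m (F v)) ∧
    (∀ (j : ℤ) (v : M.carrier), F (M.G j v) = W.G j (F v)) ∧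
    (∀ v : M.carrier, F (M.C v) = W.C (F v))

/-- `M`, together with the `b`-module map `ι : V → M`, is the induced module
`Ind_ℓ(V) = U(N) ⊗_{U(b)} V / (c - ℓ)`, characterized by its universal property. -/
def IsInduced (ℓ : ℂ) (V : BRep) (M : NSRep) (ι : V.carrier →ₗ[ℂ] M.carrier) : Prop :=
  IsBLinear V M ι ∧ M.HasCentralCharge ℓ ∧
    ∀ W : NSRep, W.HasCentralCharge ℓ →
      ∀ f : V.carrier →ₗ[ℂ] W.carrier, IsBLinear V W f →
        ∃! F : M.carrier →ₗ[ℂ] W.carrier, IsNSHom M W F ∧ F.comp ι = f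

noncomputable def nsS (a b : ℤ) : ℂ := if Even a then 1 else if Even b then 1 else -1

noncomputable def nsA (a b : ℤ) : ℂ :=
  if Even a then (if Even b then ((a:ℂ) - b) / 2 else (a:ℂ) / 4 - b / 2)
  else (if Even b then (a:ℂ) / 2 - b / 4 else 2)

noncomputable def nsB (l : ℂ) (a b : ℤ) : ℂ :=
  if a + b = 0 then
    (if Even a then (((a:ℂ)/2)^3 - (a:ℂ)/2) / 12 * l else (((a:ℂ)/2)^2 - 1/4) / 3 * l)
  else 0

lemma nsS_add_right (a b c : ℤ) : nsS a (b + c) = nsS a b * nsS a c := by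
  unfold nsS
  by_cases ha : Even a <;> by_cases hb : Even b <;> by_cases hc : Even c <;>
    simp [ha, hb, hc, Int.even_add]

lemma nsS_add_left (a b c : ℤ) : nsS (a + b) c = nsS a c * nsS b c := by
  unfold nsS
  by_cases ha : Even a <;> by_cases hb : Even b <;> by_cases hc : Even c <;>
    simp [ha, hb, hc, Int.even_add]

lemma nsS_symm (a b : ℤ) : nsS a b = nsS b a := by
  unfold nsS
  by_cases ha : Even a <;> by_cases hb : Even b <;> simp [ha, hb]

lemma nsS_sq (a b : ℤ) : nsS a b * nsS a b = 1 := by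
  unfold nsS
  by_cases ha : Even a <;> by_cases hb : Even b <;> simp [ha, hb]

lemma nsS_neg_left (a b : ℤ) : nsS (-a) b = nsS a b := by simp [nsS]
lemma nsS_neg_right (a b : ℤ) : nsS a (-b) = nsS a b := by simp [nsS]

lemma nsS_even_left (a b : ℤ) (h : Even a) : nsS a b = 1 := by simp [nsS, h]

lemma nsA_jac (z x y : ℤ) : nsA x y * nsA z (x + y) =
    nsA z x * nsA (z + x) y + nsS z x * nsA z y * nsA x (z + y) := by
  unfold nsA nsS
  by_cases ha : Even x <;> by_cases hb : Even y <;> by_cases hc : Even z <;>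
    simp [ha, hb, hc, Int.even_add] <;> ring

lemma nsB_jac (l : ℂ) (z x y : ℤ) : nsA x y * nsB l z (x + y) =
    nsA z x * nsB l (z + x) y + nsS z x * nsA z y * nsB l x (z + y) := by
  unfold nsB
  by_cases h : x + y + z = 0
  · have h1 : z + (x + y) = 0 := by omega
    have h2 : z + x + y = 0 := by omega
    have h3 : x + (z + y) = 0 := by omega
    rw [if_pos h1, if_pos h2, if_pos h3]
    obtain rfl : z = -x - y := by omega
    unfold nsA nsS
    by_cases ha : Even x <;> by_cases hb : Even y <;>
      simp [ha, hb, Int.even_add, Int.even_sub] <;> ring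
  · have h1 : ¬ z + (x + y) = 0 := by omega
    have h2 : ¬ z + x + y = 0 := by omega
    have h3 : ¬ x + (z + y) = 0 := by omega
    rw [if_neg h1, if_neg h2, if_neg h3]; ring

lemma nsB_sign (l : ℂ) (x y z : ℤ) : nsB l x y * (nsS z x * nsS z y) = nsB l x y := by
  unfold nsB
  by_cases h : x + y = 0
  · obtain rfl : y = -x := by omega
    rw [nsS_neg_right, nsS_sq]; ring
  · simp [h]

lemma nsA_skew (x y : ℤ) : nsA y x = - nsS x y * nsA x y := by
  unfold nsA nsS
  by_cases ha : Even x <;> by_cases hb : Even y <;> simp [ha, hb] <;> ring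

lemma nsB_skew (l : ℂ) (x y : ℤ) : nsB l y x = - nsS x y * nsB l x y := by
  unfold nsB nsS
  by_cases h : x + y = 0
  · obtain rfl : y = -x := by omega
    by_cases ha : Even x
    · simp [ha]; ring
    · simp [ha]; left; ring
  · have : ¬ y + x = 0 := by omega
    simp [h, this]

lemma nsB_nonneg (l : ℂ) (x y : ℤ) (hx : 0 ≤ x) (hy : 0 ≤ y) : nsB l x y = 0 := by
  unfold nsB
  split_ifs with h h2
  · obtain rfl : x = 0 := by omega
    simp
  · obtain rfl : x = 0 := by omega
    simp at h2
  · rfl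

lemma nsB_neg (l : ℂ) (x y : ℤ) (hx : x < 0) (hy : y < 0) : nsB l x y = 0 := by
  unfold nsB
  rw [if_neg (by omega)]

lemma nsA_ne (T j : ℤ) (hT : Even T) (hT0 : 0 < T) (hj : 0 < j) : nsA (T + j) (-j) ≠ 0 := by
  unfold nsA
  by_cases h : Even j
  · simp only [Int.even_add, hT, h, even_neg, if_true, iff_self]
    intro h0
    have : ((T + 2 * j : ℤ) : ℂ) = 0 := by push_cast at h0 ⊢; linear_combination 2 * h0
    have := Int.cast_eq_zero.1 this
    omega
  · simp [Int.even_add, hT, h]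

/-! words -/
section words
variable {V M : Type} [AddCommGroup V] [Module ℂ V] [AddCommGroup M] [Module ℂ M]

lemma supp_ind {I M' : Type} [AddCommGroup M'] [Module ℂ M'] (S : Set I) (N : Submodule ℂ M')
    (f : (I →₀ V) →ₗ[ℂ] M')
    (h : ∀ w ∈ S, ∀ v, f (Finsupp.single w v) ∈ N) (P : I →₀ V)
    (hP : P ∈ Finsupp.supported V ℂ S) : f P ∈ N := by
  have : P = P.sum Finsupp.single := (Finsupp.sum_single P).symm
  rw [this, map_finsuppSum]
  refine Submodule.sum_mem _ fun w hw => h w ?_ _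
  exact (Finsupp.mem_supported ℂ P).1 hP hw

def nsWt : List ℕ → ℤ
  | [] => 0
  | j :: w => nsWt w + j + 2

lemma nsWt_nonneg (w : List ℕ) : 0 ≤ nsWt w := by
  induction w with
  | nil => simp [nsWt]
  | cons j w ih => simp only [nsWt]; omega

def evw (E : ℤ → M →ₗ[ℂ] M) (i : V →ₗ[ℂ] M) : List ℕ → V →ₗ[ℂ] M
  | [] => i
  | j :: w => (E (-(j + 1))) ∘ₗ evw E i w

noncomputable def evP (E : ℤ → M →ₗ[ℂ] M) (i : V →ₗ[ℂ] M) : (List ℕ →₀ V) →ₗ[ℂ] M :=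
  Finsupp.lsum ℂ (evw E i)

lemma evP_single (E : ℤ → M →ₗ[ℂ] M) (i : V →ₗ[ℂ] M) (w : List ℕ) (v : V) :
    evP E i (Finsupp.single w v) = evw E i w v := by simp [evP]

noncomputable def nsF (E : ℤ → M →ₗ[ℂ] M) (i : V →ₗ[ℂ] M) (d : ℤ) : Submodule ℂ M :=
  (Finsupp.supported V ℂ {w | nsWt w ≤ d}).map (evP E i)

lemma nsF_mono (E : ℤ → M →ₗ[ℂ] M) (i : V →ₗ[ℂ] M) {d d' : ℤ} (h : d ≤ d') :
    nsF E i d ≤ nsF E i d' :=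
  Submodule.map_mono (Finsupp.supported_mono fun _ hw => le_trans hw h)

lemma evw_mem (E : ℤ → M →ₗ[ℂ] M) (i : V →ₗ[ℂ] M) (w : List ℕ) (v : V) (d : ℤ) (h : nsWt w ≤ d) :
    evw E i w v ∈ nsF E i d :=
  ⟨Finsupp.single w v, Finsupp.single_mem_supported ℂ _ h, evP_single E i w v⟩

lemma nsF_ind (E : ℤ → M →ₗ[ℂ] M) (i : V →ₗ[ℂ] M) (d : ℤ) {M' : Type} [AddCommGroup M']
    [Module ℂ M'] (f : M →ₗ[ℂ] M') (N : Submodule ℂ M')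
    (h : ∀ w v, nsWt w ≤ d → f (evw E i w v) ∈ N) {x : M} (hx : x ∈ nsF E i d) : f x ∈ N := by
  obtain ⟨P, hP, rfl⟩ := hx
  refine supp_ind _ N (f ∘ₗ evP E i) (fun w hw v => ?_) P hP
  rw [LinearMap.comp_apply, evP_single]
  exact h w v hw

lemma nsF_neg (E : ℤ → M →ₗ[ℂ] M) (i : V →ₗ[ℂ] M) (d : ℤ) (hd : d < 0) {x : M}
    (hx : x ∈ nsF E i d) : x = 0 := by
  have := nsF_ind E i d LinearMap.id ⊥ (fun w v h => by have := nsWt_nonneg w; omega) hx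
  simpa using this

lemma nsF_cons (E : ℤ → M →ₗ[ℂ] M) (i : V →ₗ[ℂ] M) (d d' : ℤ) (j : ℕ) (h : d + j + 2 ≤ d') {x : M}
    (hx : x ∈ nsF E i d) : E (-(j + 1)) x ∈ nsF E i d' :=
  nsF_ind E i d (E (-(j + 1))) _ (fun w v hw =>
    evw_mem E i (j :: w) v d' (by simp only [nsWt]; omega)) hx

noncomputable def nsDw (i : ℕ) : List ℕ → V →ₗ[ℂ] (List ℕ →₀ V)
  | [] => 0
  | j :: w => nsS (i + 1) (j + 1) • (Finsupp.lmapDomain V ℂ (List.cons j)) ∘ₗ nsDw i w +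
      if i = j then Finsupp.lsingle w else 0

noncomputable def nsD (i : ℕ) : (List ℕ →₀ V) →ₗ[ℂ] (List ℕ →₀ V) := Finsupp.lsum ℂ (nsDw i)

lemma nsD_single (i : ℕ) (w : List ℕ) (v : V) : nsD i (Finsupp.single w v) = nsDw i w v := by
  simp [nsD]

lemma nsDw_supp (i : ℕ) (w : List ℕ) (v : V) :
    nsDw i w v ∈ Finsupp.supported V ℂ {u | nsWt u ≤ nsWt w - (i + 2)} := by
  induction w with
  | nil => simp [nsDw]
  | cons j w ih =>
    simp only [nsDw, LinearMap.add_apply, LinearMap.smul_apply, LinearMap.comp_apply]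
    refine Submodule.add_mem _ (Submodule.smul_mem _ _ ?_) ?_
    · refine supp_ind _ _ (Finsupp.lmapDomain V ℂ (List.cons j)) (fun u hu v' => ?_) _ ih
      rw [Finsupp.lmapDomain_apply, Finsupp.mapDomain_single]
      apply Finsupp.single_mem_supported
      simp only [Set.mem_ofPred_eq, nsWt] at hu ⊢
      omega
    · split_ifs with h
      · subst h
        apply Finsupp.single_mem_supported
        simp only [Set.mem_ofPred_eq, nsWt]
        omega
      · simp

lemma nsD_supp (i : ℕ) (d : ℤ) (P : List ℕ →₀ V) (hP : P ∈ Finsupp.supported V ℂ {u | nsWt u ≤ d}) :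
    nsD i P ∈ Finsupp.supported V ℂ {u | nsWt u ≤ d - (i + 2)} := by
  refine supp_ind _ _ (nsD i) (fun u hu v' => ?_) _ hP
  rw [nsD_single]
  refine Finsupp.supported_mono ?_ (nsDw_supp i u v')
  intro x hx
  simp only [Set.mem_ofPred_eq] at hu hx ⊢
  omega

noncomputable def nsMap {I : Type} (A : V →ₗ[ℂ] V) : (I →₀ V) →ₗ[ℂ] (I →₀ V) :=
  Finsupp.mapRange.linearMap A

lemma nsMap_single {I : Type} (A : V →ₗ[ℂ] V) (w : I) (v : V) :
    nsMap A (Finsupp.single w v) = Finsupp.single w (A v) := by simp [nsMap]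

lemma nsMap_supp {I : Type} (A : V →ₗ[ℂ] V) (S : Set I) (P : I →₀ V)
    (hP : P ∈ Finsupp.supported V ℂ S) : nsMap A P ∈ Finsupp.supported V ℂ S := by
  refine supp_ind _ _ (nsMap A) (fun u hu v' => ?_) _ hP
  rw [nsMap_single]
  exact Finsupp.single_mem_supported _ _ hu

lemma nsMap_comp {I : Type} (A B : V →ₗ[ℂ] V) (P : I →₀ V) :
    nsMap A (nsMap B P) = nsMap (A ∘ₗ B) P := by
  ext w; simp [nsMap]

lemma nsMap_id {I : Type} (P : I →₀ V) : nsMap LinearMap.id P = P := by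
  ext w; simp [nsMap]

lemma nsMap_dw (i : ℕ) (A : V →ₗ[ℂ] V) (w : List ℕ) (v : V) :
    nsMap A (nsDw i w v) = nsDw i w (A v) := by
  induction w with
  | nil => simp [nsDw]
  | cons j w ih =>
    have key : ∀ Q : List ℕ →₀ V, nsMap A (Finsupp.lmapDomain V ℂ (List.cons j) Q) =
        Finsupp.lmapDomain V ℂ (List.cons j) (nsMap A Q) := by
      intro Q
      induction Q using Finsupp.induction_linear with
      | zero => simp
      | add f g hf hg => simp only [map_add, hf, hg]
      | single a b => simp [nsMap_single, Finsupp.mapDomain_single]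
    simp only [nsDw, LinearMap.add_apply, LinearMap.smul_apply, LinearMap.comp_apply, map_add,
      map_smul, key, ih]
    split_ifs <;> simp [nsMap_single]

lemma nsMap_D (i : ℕ) (A : V →ₗ[ℂ] V) (P : List ℕ →₀ V) :
    nsMap A (nsD i P) = nsD i (nsMap A P) := by
  induction P using Finsupp.induction_linear with
  | zero => simp
  | add f g hf hg => simp only [map_add, hf, hg]
  | single a b => rw [nsMap_single, nsD_single, nsD_single, nsMap_dw]

end words
section main
variable {V M : Type} [AddCommGroup V] [Module ℂ V] [AddCommGroup M] [Module ℂ M]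

def nsE (T n : ℤ) : ℤ := if n < 0 then 1 - n else if n ≤ T then 0 else T - n - 1

structure NsSetup (l : ℂ) (T : ℤ) (E : ℤ → M →ₗ[ℂ] M) (i : V →ₗ[ℂ] M) (e : ℤ → V →ₗ[ℂ] V) :
    Prop where
  rel : ∀ a b x, E a (E b x) = nsS a b • E b (E a x) + nsA a b • E (a + b) x + nsB l a b • x
  hi : ∀ n, 0 ≤ n → ∀ v, E n (i v) = i (e n v)
  van : ∀ n, T < n → ∀ v, e n v = 0
  hT : Even T
  hT2 : 2 ≤ T
  inj : Function.Injective (e T)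

variable {l : ℂ} {T : ℤ} {E : ℤ → M →ₗ[ℂ] M} {i : V →ₗ[ℂ] M} {e : ℤ → V →ₗ[ℂ] V}

lemma NsSetup.E_evw (H : NsSetup l T E i e) (w : List ℕ) : ∀ n v,
    E n (evw E i w v) ∈ nsF E i (nsWt w + nsE T n) := by
  have hT2 := H.hT2
  induction w with
  | nil =>
    intro n v
    simp only [evw, nsWt, nsE]
    split_ifs with h1 h2
    · have := evw_mem E i [(-n - 1).toNat] v (0 + (1 - n)) (by simp only [nsWt]; omega)
      simp only [evw, LinearMap.comp_apply] at this
      rwa [show (-(((-n - 1).toNat : ℤ) + 1)) = n by omega] at this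
    · rw [H.hi n (by omega)]
      exact evw_mem E i [] _ _ (by simp [nsWt])
    · rw [H.hi n (by omega), H.van n (by omega)]; simp
  | cons j w ih =>
    intro n v
    simp only [evw, LinearMap.comp_apply]
    rw [H.rel]
    refine Submodule.add_mem _ (Submodule.add_mem _ (Submodule.smul_mem _ _ ?_)
      (Submodule.smul_mem _ _ ?_)) ?_
    · exact nsF_cons E i _ _ j (by simp only [nsWt]; omega) (ih n v)
    · refine nsF_mono E i ?_ (ih _ v)
      simp only [nsWt, nsE]
      split_ifs <;> omega
    · by_cases h : n + -((j:ℤ) + 1) = 0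
      · refine Submodule.smul_mem _ _ (evw_mem E i w v _ ?_)
        simp only [nsWt, nsE]
        split_ifs <;> omega
      · rw [nsB, if_neg h, zero_smul]; exact Submodule.zero_mem _

lemma NsSetup.E_mem (H : NsSetup l T E i e) (n d : ℤ) {x : M} (hx : x ∈ nsF E i d) :
    E n x ∈ nsF E i (d + nsE T n) :=
  nsF_ind E i d (E n) _ (fun w v hw => nsF_mono E i (by omega) (H.E_evw w n v)) hx

lemma NsSetup.strict (H : NsSetup l T E i e) (j : ℕ) (w : List ℕ) (v : V) (n : ℤ) (hn : T ≤ n) :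
    E n (evw E i (j :: w) v) - nsS n (-(j + 1)) • E (-(j + 1)) (E n (evw E i w v)) -
      (if n = T + (j + 1) then nsA n (-(j + 1)) • E T (evw E i w v) else 0)
      ∈ nsF E i (nsWt w + j + 2 + nsE T n - 1) := by
  have hT2 := H.hT2
  simp only [evw, LinearMap.comp_apply]
  rw [H.rel n]
  have h2 : nsB l n (-((j:ℤ) + 1)) • evw E i w v ∈ nsF E i (nsWt w + j + 2 + nsE T n - 1) := by
    by_cases h : n + -((j:ℤ) + 1) = 0
    · refine Submodule.smul_mem _ _ (evw_mem E i w v _ ?_)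
      simp only [nsE]
      split_ifs <;> omega
    · rw [nsB, if_neg h, zero_smul]; exact Submodule.zero_mem _
  split_ifs with h
  · convert h2 using 1
    rw [show n + -((j:ℤ) + 1) = T by omega]
    module
  · convert Submodule.add_mem _ (Submodule.smul_mem _ (nsA n (-(j + 1)))
      (nsF_mono E i ?_ (H.E_evw w (n + -((j:ℤ) + 1)) v))) h2 using 1
    · module
    · simp only [nsE]
      split_ifs <;> omega

lemma NsSetup.ET (H : NsSetup l T E i e) (w : List ℕ) (v : V) :
    E T (evw E i w v) - evw E i w (e T v) ∈ nsF E i (nsWt w - 1) := by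
  have hT2 := H.hT2
  induction w with
  | nil => simp [evw, H.hi T (by omega)]
  | cons j w ih =>
    have h1 := H.strict j w v T le_rfl
    rw [if_neg (by omega), nsS_even_left _ _ H.hT] at h1
    have h2 := nsF_cons E i _ (nsWt (j :: w) - 1) j (by simp only [nsWt]; omega) ih
    have h3 := nsF_mono E i (d' := nsWt (j :: w) - 1)
      (by simp only [nsWt, nsE]; split_ifs <;> omega) h1
    convert Submodule.add_mem _ h3 h2 using 1
    simp only [evw, LinearMap.comp_apply, map_sub]
    module

lemma NsSetup.ETi (H : NsSetup l T E i e) (k : ℕ) (w : List ℕ) (v : V) :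
    E (T + (k + 1)) (evw E i w v) - nsA (T + (k + 1)) (-(k + 1)) • evP E i (nsDw k w (e T v))
      ∈ nsF E i (nsWt w - k - 3) := by
  have hT2 := H.hT2
  induction w with
  | nil => simp [evw, nsDw, H.hi (T + (k + 1)) (by omega), H.van (T + (k + 1)) (by omega)]
  | cons j w ih =>
    have h1 := H.strict j w v (T + (k + 1)) (by omega)
    have hs : nsS (T + (k + 1)) (-(j + 1)) = nsS (k + 1) (j + 1) := by
      rw [nsS_add_left, nsS_even_left _ _ H.hT, nsS_neg_right, one_mul]
    rw [hs] at h1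
    have h2 := nsF_cons E i _ (nsWt (j :: w) - k - 3) j (by simp only [nsWt]; omega) ih
    have h3 := nsF_mono E i (d' := nsWt (j :: w) - k - 3)
      (by simp only [nsWt, nsE]; split_ifs <;> omega) h1
    have key : ∀ Q : List ℕ →₀ V, evP E i (Finsupp.lmapDomain V ℂ (List.cons j) Q) =
        E (-(j + 1)) (evP E i Q) := by
      intro Q
      induction Q using Finsupp.induction_linear with
      | zero => simp
      | add f g hf hg => simp only [map_add, hf, hg]
      | single a b => simp [evP_single, Finsupp.mapDomain_single, evw]
    have h4 := Submodule.add_mem _ h3 (Submodule.smul_mem _ (nsS (k + 1) (j + 1)) h2)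
    simp only [nsDw, LinearMap.add_apply, LinearMap.smul_apply, LinearMap.comp_apply, map_add,
      map_smul, key]
    by_cases h : k = j
    · subst h
      have h5 := nsF_mono E i (d' := nsWt (k :: w) - k - 3) (by simp only [nsWt]; omega) (H.ET w v)
      convert Submodule.add_mem _ h4 (Submodule.smul_mem _ (nsA (T + (k + 1)) (-(k + 1))) h5) using 1
      simp only [if_true, map_sub, map_smul, Finsupp.lsingle_apply, evP_single]
      module
    · rw [if_neg (by omega)] at h4
      convert h4 using 1
      simp only [if_neg h, map_sub, map_smul, LinearMap.zero_apply, map_zero]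
      module

lemma NsSetup.euler (H : NsSetup l T E i e) (N : ℕ) (w : List ℕ) (v : V) (hN : nsWt w ≤ N) :
    ∑ k ∈ Finset.range N, ((k : ℂ) + 2) • E (-(k + 1)) (evP E i (nsDw k w v))
      - (nsWt w : ℂ) • evw E i w v ∈ nsF E i (nsWt w - 1) := by
  induction w with
  | nil => simp [nsDw, nsWt]
  | cons j w ih =>
    have hw := nsWt_nonneg w
    have hN' : nsWt w + j + 2 ≤ N := by simpa only [nsWt] using hN
    have key : ∀ Q : List ℕ →₀ V, evP E i (Finsupp.lmapDomain V ℂ (List.cons j) Q) =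
        E (-(j + 1)) (evP E i Q) := by
      intro Q
      induction Q using Finsupp.induction_linear with
      | zero => simp
      | add f g hf hg => simp only [map_add, hf, hg]
      | single a b => simp [evP_single, Finsupp.mapDomain_single, evw]
    have h2 := nsF_cons E i _ (nsWt (j :: w) - 1) j (by simp only [nsWt]; omega) (ih (by omega))
    have h3 : ∑ k ∈ Finset.range N, (((k : ℂ) + 2) * (nsS (k + 1) (j + 1) *
        nsA (-(k + 1)) (-(j + 1)))) • E (-(k + 1) + -(j + 1)) (evP E i (nsDw k w v))
        ∈ nsF E i (nsWt (j :: w) - 1) := by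
      refine Submodule.sum_mem _ fun k _ => Submodule.smul_mem _ _ ?_
      refine nsF_mono E i ?_ (H.E_mem _ _ ⟨_, nsDw_supp k w v, rfl⟩)
      simp only [nsWt, nsE]
      split_ifs <;> omega
    convert Submodule.add_mem _ h2 h3 using 1
    have h4 : ∀ k ∈ Finset.range N, ((k : ℂ) + 2) • E (-(k + 1)) (evP E i (nsDw k (j :: w) v)) =
        ((k : ℂ) + 2) • E (-(j + 1)) (E (-(k + 1)) (evP E i (nsDw k w v))) +
        (((k : ℂ) + 2) * (nsS (k + 1) (j + 1) *
        nsA (-(k + 1)) (-(j + 1)))) • E (-(k + 1) + -(j + 1)) (evP E i (nsDw k w v)) +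
        if j = k then ((j : ℂ) + 2) • evw E i (j :: w) v else 0 := by
      intro k _
      simp only [nsDw, LinearMap.add_apply, LinearMap.smul_apply, LinearMap.comp_apply, map_add,
        map_smul, key]
      rw [H.rel (-(k + 1)) (-(j + 1)), nsB_neg _ _ _ (by omega) (by omega), nsS_neg_left,
        nsS_neg_right]
      have hsq := nsS_sq (k + 1) (j + 1)
      by_cases h : k = j
      · subst h
        simp only [if_true, Finsupp.lsingle_apply, evP_single, evw, LinearMap.comp_apply]
        linear_combination (norm := module) (((k:ℂ) + 2) * hsq) •
          E (-(k + 1)) (E (-(k + 1)) (evP E i (nsDw k w v)))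
      · rw [if_neg h, if_neg (Ne.symm h)]
        simp only [LinearMap.zero_apply, map_zero]
        linear_combination (norm := module) (((k:ℂ) + 2) * hsq) •
          E (-(j + 1)) (E (-(k + 1)) (evP E i (nsDw k w v)))
    rw [Finset.sum_congr rfl h4, Finset.sum_add_distrib, Finset.sum_add_distrib,
      Finset.sum_ite_eq, if_pos (Finset.mem_range.2 (by omega))]
    simp only [map_sub, map_sum, map_smul, nsWt, evw, LinearMap.comp_apply]
    push_cast
    module

lemma NsSetup.claim (H : NsSetup l T E i e) (p : Submodule ℂ M)
    (hp : ∀ n, T < n → ∀ x ∈ p, E n x ∈ p) (hpi : ∀ v, i v ∈ p → v = 0) (d : ℕ) :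
    ∀ (P : List ℕ →₀ V), P ∈ Finsupp.supported V ℂ {u | nsWt u ≤ d} →
    ∀ x ∈ nsF E i (d - 1), evP E i P + x ∈ p → ∀ A : V →ₗ[ℂ] V,
      evP E i (nsMap A P) ∈ nsF E i (d - 1) := by
  have hT2 := H.hT2
  obtain ⟨S, hS⟩ := LinearMap.exists_leftInverse_of_injective (e T)
    (LinearMap.ker_eq_bot.2 H.inj)
  induction d using Nat.strong_induction_on with
  | _ d ih =>
  intro P hP x hx hPx A
  rcases Nat.eq_zero_or_pos d with rfl | hd
  · obtain rfl := nsF_neg E i _ (by simp) hx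
    have : P = Finsupp.single [] (P []) := by
      ext w
      by_cases hw : w = []
      · subst hw; simp
      · rw [Finsupp.single_eq_of_ne (by simpa using hw)]
        by_contra h0
        have := (Finsupp.mem_supported ℂ P).1 hP (Finsupp.mem_support_iff.2 h0)
        cases w with
        | nil => exact hw rfl
        | cons j w =>
          have h1 := nsWt_nonneg w
          simp only [Set.mem_ofPred_eq, nsWt] at this
          push_cast at this
          omega
    rw [this, add_zero, evP_single] at hPx
    rw [this, hpi _ hPx]; simp
  · have h1 : ∀ k : ℕ, evP E i (nsMap A (nsD k P)) ∈ nsF E i (d - k - 3) := by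
      intro k
      have hsup := nsD_supp k d P hP
      by_cases hk : d < k + 2
      · have : nsD k P = 0 := by
          have := supp_ind _ ⊥ LinearMap.id (fun w hw v => by
            have := nsWt_nonneg w
            simp only [Set.mem_ofPred_eq] at hw
            omega) _ hsup
          simpa using this
        rw [this]; simp
      obtain ⟨d', rfl⟩ : ∃ d', d = d' + (k + 2) := ⟨d - (k + 2), by omega⟩
      have e1 : ((d' + (k + 2) : ℕ) : ℤ) - (k + 2) = d' := by push_cast; ring
      rw [e1] at hsup
      set a := nsA (T + (k + 1)) (-(k + 1)) with ha
      have ha0 : a ≠ 0 := nsA_ne T (k + 1) H.hT (by omega) (by omega)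
      have hB : E (T + (k + 1)) (evP E i P) - a • evP E i (nsD k (nsMap (e T) P)) ∈
          nsF E i (d' - 1) := by
        refine supp_ind _ (nsF E i (d' - 1)) (E (T + (k + 1)) ∘ₗ evP E i -
          a • (evP E i ∘ₗ nsD k ∘ₗ nsMap (e T))) (fun w hw v => ?_) P hP
        simp only [LinearMap.sub_apply, LinearMap.smul_apply, LinearMap.comp_apply, evP_single,
          nsMap_single, nsD_single]
        refine nsF_mono E i ?_ (H.ETi k w v)
        simp only [Set.mem_ofPred_eq] at hw
        push_cast at hw
        omega
      have hx' : E (T + (k + 1)) x ∈ nsF E i (d' - 1) := by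
        refine nsF_mono E i ?_ (H.E_mem _ _ hx)
        simp only [nsE]
        push_cast
        split_ifs <;> omega
      have hIH := ih d' (by omega) (a • nsD k (nsMap (e T) P))
        (Submodule.smul_mem _ _ (by rw [← nsMap_D]; exact nsMap_supp _ _ _ hsup))
        _ (Submodule.add_mem _ hB hx') (by
          have := hp (T + (k + 1)) (by omega) _ hPx
          convert this using 1
          simp only [map_add, map_smul]
          module) (A ∘ₗ S)
      rw [← nsMap_D, map_smul, nsMap_comp, LinearMap.comp_assoc, hS, LinearMap.comp_id,
        map_smul] at hIH
      have := Submodule.smul_mem _ a⁻¹ hIH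
      rw [smul_smul, inv_mul_cancel₀ ha0, one_smul] at this
      refine nsF_mono E i ?_ this
      push_cast; omega
    have h2 : ∑ k ∈ Finset.range d, ((k : ℂ) + 2) • E (-(k + 1)) (evP E i (nsD k (nsMap A P)))
        ∈ nsF E i (d - 1) := by
      refine Submodule.sum_mem _ fun k _ => Submodule.smul_mem _ _ ?_
      rw [← nsMap_D]
      exact nsF_cons E i _ _ k (by omega) (h1 k)
    have h3 : ∑ k ∈ Finset.range d, ((k : ℂ) + 2) • E (-(k + 1)) (evP E i (nsD k (nsMap A P)))
        - (d : ℂ) • evP E i (nsMap A P) ∈ nsF E i (d - 1) := by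
      have := supp_ind _ (nsF E i (d - 1)) ((∑ k ∈ Finset.range d, ((k : ℂ) + 2) •
        (E (-(k + 1)) ∘ₗ evP E i ∘ₗ nsD k)) - (d : ℂ) • evP E i) (fun w hw v => ?_) _
        (nsMap_supp A _ P hP)
      · simpa [LinearMap.sum_apply] using this
      · simp only [LinearMap.sub_apply, LinearMap.smul_apply, LinearMap.comp_apply, evP_single,
          nsD_single, LinearMap.sum_apply]
        have h4 := nsF_mono E i (d' := (d:ℤ) - 1) (by
          simp only [Set.mem_ofPred_eq] at hw; omega) (H.euler d w v hw)
        simp only [Set.mem_ofPred_eq] at hw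
        rcases hw.lt_or_eq with hw | hw
        · have h5 := evw_mem E i w v (d - 1) (by omega)
          convert Submodule.add_mem _ h4 (Submodule.smul_mem _ ((nsWt w : ℂ) - d) h5) using 1
          module
        · rw [hw] at h4
          simpa using h4
    have h4 := Submodule.smul_mem _ (d : ℂ)⁻¹ (Submodule.sub_mem _ h2 h3)
    rw [sub_sub_cancel, smul_smul, inv_mul_cancel₀ (by exact_mod_cast hd.ne'), one_smul] at h4
    exact h4

lemma NsSetup.inter (H : NsSetup l T E i e) (p : Submodule ℂ M)
    (hp : ∀ n, T < n → ∀ x ∈ p, E n x ∈ p) (hpi : ∀ v, i v ∈ p → v = 0) (d : ℕ) :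
    ∀ x ∈ p, x ∈ nsF E i (d - 1) → x = 0 := by
  induction d with
  | zero => intro x _ hx; exact nsF_neg E i _ (by simp) hx
  | succ d ih =>
    rintro x hx ⟨P, hP, rfl⟩
    refine ih _ hx ?_
    have := H.claim p hp hpi d P (by simpa using hP) 0 (Submodule.zero_mem _) (by simpa using hx)
      LinearMap.id
    rwa [nsMap_id] at this

lemma NsSetup.range_inv (H : NsSetup l T E i e) (n : ℤ) (x : M)
    (hx : x ∈ LinearMap.range (evP E i)) : E n x ∈ LinearMap.range (evP E i) := by
  obtain ⟨P, rfl⟩ := hx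
  refine supp_ind Set.univ _ (E n ∘ₗ evP E i) (fun w _ v => ?_) P (by simp)
  rw [LinearMap.comp_apply, evP_single]
  obtain ⟨Q, _, hQ⟩ := H.E_evw w n v
  exact ⟨Q, hQ⟩

lemma evP_exists (x : M) (hx : x ∈ LinearMap.range (evP E i)) : ∃ d : ℕ, x ∈ nsF E i (d - 1) := by
  obtain ⟨P, rfl⟩ := hx
  refine ⟨(∑ w ∈ P.support, (nsWt w).toNat) + 1, P, ?_, rfl⟩
  intro w hw
  have h := Finset.single_le_sum (f := fun w => (nsWt w).toNat) (fun _ _ => Nat.zero_le _) hw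
  simp only [Set.mem_ofPred_eq]
  omega

end main
section construct
variable {V : Type} [AddCommGroup V] [Module ℂ V]

noncomputable def wY (x : ℤ) : (List ℤ →₀ V) →ₗ[ℂ] (List ℤ →₀ V) :=
  Finsupp.lmapDomain V ℂ (List.cons x)

lemma wY_single (x : ℤ) (w : List ℤ) (v : V) :
    wY x (Finsupp.single w v) = Finsupp.single (x :: w) v := by
  simp [wY, Finsupp.mapDomain_single]

noncomputable def wRw (l : ℂ) (e : ℤ → V →ₗ[ℂ] V) (x : ℤ) : List ℤ → V →ₗ[ℂ] (List ℤ →₀ V)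
  | [] => Finsupp.lsingle [] ∘ₗ e x
  | y :: w => nsS x y • (wY y ∘ₗ wRw l e x w) + nsA x y • Finsupp.lsingle ((x + y) :: w)
      + nsB l x y • Finsupp.lsingle w

noncomputable def wR (l : ℂ) (e : ℤ → V →ₗ[ℂ] V) (x : ℤ) : (List ℤ →₀ V) →ₗ[ℂ] (List ℤ →₀ V) :=
  Finsupp.lsum ℂ (wRw l e x)

lemma wR_single (l : ℂ) (e : ℤ → V →ₗ[ℂ] V) (x : ℤ) (w : List ℤ) (v : V) :
    wR l e x (Finsupp.single w v) = wRw l e x w v := by simp [wR]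

lemma wR_nil (l : ℂ) (e : ℤ → V →ₗ[ℂ] V) (x : ℤ) (v : V) :
    wR l e x (Finsupp.single [] v) = Finsupp.single [] (e x v) := by simp [wR_single, wRw]

lemma wR_Y (l : ℂ) (e : ℤ → V →ₗ[ℂ] V) (x y : ℤ) (m : List ℤ →₀ V) :
    wR l e x (wY y m) = nsS x y • wY y (wR l e x m) + nsA x y • wY (x + y) m + nsB l x y • m := by
  induction m using Finsupp.induction_linear with
  | zero => simp
  | add f g hf hg => simp only [map_add, hf, hg]; module
  | single w v => simp [wY_single, wR_single, wRw]

noncomputable def wPhiN (l : ℂ) (e : ℤ → V →ₗ[ℂ] V) : ℕ → (List ℤ →₀ V) →ₗ[ℂ] V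
  | 0 => Finsupp.lapply []
  | n + 1 => Finsupp.lsum ℂ (fun w => match w with
      | [] => LinearMap.id
      | x :: w => if 0 ≤ x then wPhiN l e n ∘ₗ wR l e x ∘ₗ Finsupp.lsingle w else 0)

lemma wRw_supp (l : ℂ) (e : ℤ → V →ₗ[ℂ] V) (x : ℤ) (w : List ℤ) (v : V) :
    wRw l e x w v ∈ Finsupp.supported V ℂ {u : List ℤ | u.length ≤ w.length} := by
  induction w with
  | nil => exact Finsupp.single_mem_supported _ _ (by simp)
  | cons y w ih =>
    simp only [wRw, LinearMap.add_apply, LinearMap.smul_apply, LinearMap.comp_apply]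
    refine Submodule.add_mem _ (Submodule.add_mem _ (Submodule.smul_mem _ _ ?_)
      (Submodule.smul_mem _ _ ?_)) (Submodule.smul_mem _ _ ?_)
    · refine supp_ind _ _ (wY y) (fun u hu v' => ?_) _ ih
      rw [wY_single]
      exact Finsupp.single_mem_supported _ _ (by simpa using hu)
    · exact Finsupp.single_mem_supported _ _ (by simp)
    · exact Finsupp.single_mem_supported _ _ (by simp)

lemma wPhiN_stable (l : ℂ) (e : ℤ → V →ₗ[ℂ] V) (n : ℕ) :
    ∀ w : List ℤ, w.length ≤ n → ∀ v, wPhiN l e (n + 1) (Finsupp.single w v) =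
      wPhiN l e n (Finsupp.single w v) := by
  induction n with
  | zero =>
    intro w hw v
    obtain rfl : w = [] := by simpa using hw
    simp [wPhiN]
  | succ n ih =>
    intro w hw v
    cases w with
    | nil => simp [wPhiN]
    | cons x w =>
      have hc : ∀ k, wPhiN l e (k + 1) (Finsupp.single (x :: w) v) =
          if 0 ≤ x then wPhiN l e k (wRw l e x w v) else 0 := by
        intro k
        simp only [wPhiN, Finsupp.lsum_single]
        split_ifs <;> simp [wR_single]
      rw [hc, hc]
      split_ifs with h
      · have := supp_ind _ ⊥ (wPhiN l e (n + 1) - wPhiN l e n) (fun u hu v' => by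
          simp only [Set.mem_ofPred_eq] at hu
          simp only [List.length_cons] at hw
          simp [ih u (by omega) v']) _ (wRw_supp l e x w v)
        simpa [sub_eq_zero] using this
      · rfl

lemma wPhiN_stable' (l : ℂ) (e : ℤ → V →ₗ[ℂ] V) (w : List ℤ) (v : V) (n : ℕ) (hn : w.length ≤ n) :
    wPhiN l e n (Finsupp.single w v) = wPhiN l e w.length (Finsupp.single w v) := by
  induction n, hn using Nat.le_induction with
  | base => rfl
  | succ n hn ih => rw [wPhiN_stable l e n w hn, ih]

noncomputable def wPhi (l : ℂ) (e : ℤ → V →ₗ[ℂ] V) : (List ℤ →₀ V) →ₗ[ℂ] V :=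
  Finsupp.lsum ℂ (fun w => wPhiN l e w.length ∘ₗ Finsupp.lsingle w)

lemma wPhi_nil (l : ℂ) (e : ℤ → V →ₗ[ℂ] V) (v : V) : wPhi l e (Finsupp.single [] v) = v := by
  simp [wPhi, wPhiN]

lemma wPhi_neg (l : ℂ) (e : ℤ → V →ₗ[ℂ] V) (x : ℤ) (hx : x < 0) (m : List ℤ →₀ V) :
    wPhi l e (wY x m) = 0 := by
  induction m using Finsupp.induction_linear with
  | zero => simp
  | add f g hf hg => simp only [map_add, hf, hg, add_zero]
  | single w v => simp [wY_single, wPhi, wPhiN, not_le.2 hx]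

lemma wPhi_nonneg (l : ℂ) (e : ℤ → V →ₗ[ℂ] V) (x : ℤ) (hx : 0 ≤ x) (m : List ℤ →₀ V) :
    wPhi l e (wY x m) = wPhi l e (wR l e x m) := by
  induction m using Finsupp.induction_linear with
  | zero => simp
  | add f g hf hg => simp only [map_add, hf, hg]
  | single w v =>
    have := supp_ind _ ⊥ (wPhi l e - wPhiN l e w.length) (fun u hu v' => by
          simp only [Set.mem_ofPred_eq] at hu
          simp [wPhi, wPhiN_stable' l e u v' _ hu]) _ (wRw_supp l e x w v)
    have h2 : wPhi l e (wRw l e x w v) = wPhiN l e w.length (wRw l e x w v) := by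
      simpa [sub_eq_zero] using this
    rw [wR_single, h2, wY_single]
    simp [wPhi, wPhiN, hx, wR_single]

def IsBE (e : ℤ → V →ₗ[ℂ] V) : Prop := ∀ x y, 0 ≤ x → 0 ≤ y → ∀ v,
  e x (e y v) = nsS x y • e y (e x v) + nsA x y • e (x + y) v

lemma wR_comm (l : ℂ) (e : ℤ → V →ₗ[ℂ] V) (he : IsBE e) (x y : ℤ) (hx : 0 ≤ x) (hy : 0 ≤ y)
    (m : List ℤ →₀ V) : wR l e x (wR l e y m) =
      nsS x y • wR l e y (wR l e x m) + nsA x y • wR l e (x + y) m := by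
  induction m using Finsupp.induction_linear with
  | zero => simp
  | add f g hf hg => simp only [map_add, hf, hg]; module
  | single w v =>
    induction w with
    | nil =>
      simp only [wR_nil]
      rw [he x y hx hy]
      simp [Finsupp.single_add, ← Finsupp.smul_single]
    | cons z w ih =>
      rw [← wY_single]
      set m := Finsupp.single w v
      simp only [wR_Y, map_add, map_smul, ih]
      rw [show y + (x + z) = x + (y + z) by ring, show x + y + z = x + (y + z) by ring,
        nsS_add_left, nsS_add_right, nsS_add_right]
      have j1 := nsA_jac x y z
      have j2 := nsB_jac l x y z
      have s1 := nsB_sign l x z y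
      have s2 := nsB_sign l y z x
      have s3 := nsS_sq x y
      have s4 := nsS_symm x y
      rw [← s4] at s1 ⊢
      linear_combination (norm := module) j1 • wY (x + (y + z)) m + j2 • m
        - (nsA x z * nsS y z * s3) • wY (x + z) (wR l e y m)
        + (nsS x y * s1 - nsB l x z * nsS y z * s3) • wR l e y m - s2 • wR l e x m

/-- relator -/
noncomputable def wRel (l : ℂ) (x y : ℤ) (m : List ℤ →₀ V) : List ℤ →₀ V :=
  wY x (wY y m) - nsS x y • wY y (wY x m) - nsA x y • wY (x + y) m - nsB l x y • m

lemma wR_rel (l : ℂ) (e : ℤ → V →ₗ[ℂ] V) (z x y : ℤ) (m : List ℤ →₀ V) :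
    wR l e z (wRel l x y m) = (nsS z x * nsS z y) • wRel l x y (wR l e z m) +
      nsA z x • wRel l (z + x) y m + (nsS z x * nsA z y) • wRel l x (z + y) m := by
  simp only [wRel, map_sub, map_smul, wR_Y, map_add]
  rw [show z + x + y = z + (x + y) by ring, show x + (z + y) = z + (x + y) by ring]
  have j1 := nsA_jac z x y
  have j2 := nsB_jac l z x y
  have s1 := nsB_sign l z y x
  have s2 := nsB_sign l z x y
  have s3 := nsB_sign l x y z
  have q1 := nsS_sq x y
  have q2 := nsS_sq z x
  rw [nsS_symm x z] at s1
  rw [nsS_symm y z, nsS_symm y x] at s2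
  rw [nsS_add_left, nsS_add_right, nsS_add_right, nsS_symm x z]
  linear_combination (norm := module) (-j1) • wY (z + (x + y)) m - j2 • m
    + (nsS x y * s1 - nsB l z y * nsS z x * q1) • wY x m - s2 • wY y m + s3 • wR l e z m
    + (nsS x y * nsA z y * q2) • wY (z + y) (wY x m)

lemma wPhi_rel (l : ℂ) (e : ℤ → V →ₗ[ℂ] V) (he : IsBE e) (x y : ℤ) (m : List ℤ →₀ V) :
    wPhi l e (wRel l x y m) = 0 := by
  simp only [wRel, map_sub, map_smul]
  rcases lt_or_ge x 0 with hx | hx <;> rcases lt_or_ge y 0 with hy | hy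
  · rw [wPhi_neg _ _ _ hx, wPhi_neg _ _ _ hy, wPhi_neg _ _ _ (by omega), nsB_neg _ _ _ hx hy]
    simp
  · rw [wPhi_neg _ _ _ hx, wPhi_nonneg _ _ _ hy, wR_Y]
    simp only [map_add, map_smul]
    rw [wPhi_neg _ _ _ hx, nsA_skew x y, nsB_skew l x y, add_comm y x]
    have := nsS_sq x y
    linear_combination (norm := module) (nsA x y * this) • wPhi l e (wY (x + y) m) + (nsB l x y * this) • wPhi l e m
  · rw [wPhi_neg _ _ _ hy, wPhi_nonneg _ _ _ hx, wR_Y]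
    simp only [map_add, map_smul]
    rw [wPhi_neg _ _ _ hy]
    module
  · rw [wPhi_nonneg _ _ _ hx, wPhi_nonneg _ _ _ hy, wR_Y, wR_Y]
    simp only [map_add, map_smul]
    rw [wPhi_nonneg _ _ _ hx, wPhi_nonneg _ _ _ hy, wR_comm l e he x y hx hy]
    simp only [map_add, map_smul]
    rw [nsA_skew x y, add_comm y x, nsB_nonneg _ _ _ hx hy, nsB_nonneg _ _ _ hy hx,
      wPhi_nonneg _ _ (x + y) (by omega), nsS_symm y x]
    have := nsS_sq x y
    linear_combination (norm := module) (-(nsS x y * this)) • wPhi l e (wR l e y (wR l e x m))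

/-- the largest `wR`-stable subspace in the kernel of `wPhi` -/
def wK (l : ℂ) (e : ℤ → V →ₗ[ℂ] V) (m : List ℤ →₀ V) : Prop :=
  ∀ zs : List ℤ, (∀ z ∈ zs, 0 ≤ z) → wPhi l e (zs.foldl (fun m z => wR l e z m) m) = 0

lemma wFold_add (l : ℂ) (e : ℤ → V →ₗ[ℂ] V) (zs : List ℤ) : ∀ (m m' : List ℤ →₀ V),
    zs.foldl (fun m z => wR l e z m) (m + m') =
    zs.foldl (fun m z => wR l e z m) m + zs.foldl (fun m z => wR l e z m) m' := by
  induction zs with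
  | nil => intro m m'; rfl
  | cons z zs ih => intro m m'; simp only [List.foldl_cons, map_add, ih]

lemma wFold_smul (l : ℂ) (e : ℤ → V →ₗ[ℂ] V) (zs : List ℤ) : ∀ (c : ℂ) (m : List ℤ →₀ V),
    zs.foldl (fun m z => wR l e z m) (c • m) = c • zs.foldl (fun m z => wR l e z m) m := by
  induction zs with
  | nil => intro m m'; rfl
  | cons z zs ih => intro m m'; simp only [List.foldl_cons, map_smul, ih]

lemma wK_R (l : ℂ) (e : ℤ → V →ₗ[ℂ] V) (m : List ℤ →₀ V) (hm : wK l e m) (z : ℤ) (hz : 0 ≤ z) :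
    wK l e (wR l e z m) := by
  intro zs hzs
  exact hm (z :: zs) (by simpa using ⟨hz, hzs⟩)

lemma wK_Y (l : ℂ) (e : ℤ → V →ₗ[ℂ] V) (m : List ℤ →₀ V) (hm : wK l e m) (y : ℤ) :
    wK l e (wY y m) := by
  intro zs
  induction zs generalizing m y with
  | nil =>
    intro _
    rcases lt_or_ge y 0 with hy | hy
    · exact wPhi_neg l e y hy m
    · simp only [List.foldl_nil]
      rw [wPhi_nonneg l e y hy m]
      exact hm [y] (by simpa using hy)
  | cons z zs ih =>
    intro hzs
    have hz : 0 ≤ z := hzs z (by simp)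
    have hzs' : ∀ z ∈ zs, 0 ≤ z := fun a ha => hzs a (by simp [ha])
    simp only [List.foldl_cons, wR_Y, wFold_add, wFold_smul, map_add, map_smul]
    rw [ih _ (wK_R l e m hm z hz) y hzs', ih _ hm _ hzs', hm zs hzs']
    simp

lemma wK_rel (l : ℂ) (e : ℤ → V →ₗ[ℂ] V) (he : IsBE e) (x y : ℤ) (m : List ℤ →₀ V) :
    wK l e (wRel l x y m) := by
  intro zs
  induction zs generalizing m x y with
  | nil => intro _; exact wPhi_rel l e he x y m
  | cons z zs ih =>
    intro hzs
    have hzs' : ∀ z ∈ zs, 0 ≤ z := fun a ha => hzs a (by simp [ha])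
    simp only [List.foldl_cons, wR_rel, wFold_add, wFold_smul, map_add, map_smul]
    rw [ih _ _ _ hzs', ih _ _ _ hzs', ih _ _ _ hzs']
    simp

lemma wK_q (l : ℂ) (e : ℤ → V →ₗ[ℂ] V) (he : IsBE e) (n : ℤ) (hn : 0 ≤ n) (w : List ℤ) (v : V) :
    wK l e (Finsupp.single (w ++ [n]) v - Finsupp.single w (e n v)) := by
  induction w with
  | nil =>
    intro zs
    induction zs generalizing n v with
    | nil =>
      intro _
      simp only [List.foldl_nil, List.nil_append, map_sub]
      rw [← wY_single, wPhi_nonneg _ _ _ hn, wR_nil, sub_self]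
    | cons z zs ih =>
      intro hzs
      have hz : 0 ≤ z := hzs z (by simp)
      have hzs' : ∀ z ∈ zs, 0 ≤ z := fun a ha => hzs a (by simp [ha])
      have key : wR l e z (Finsupp.single ([] ++ [n]) v - Finsupp.single [] (e n v)) =
          nsS z n • (Finsupp.single ([] ++ [n]) (e z v) - Finsupp.single [] (e n (e z v))) +
          nsA z n • (Finsupp.single ([] ++ [z + n]) v - Finsupp.single [] (e (z + n) v)) := by
        simp only [List.nil_append, ← wY_single, map_sub, wR_Y, wR_nil]
        rw [he z n hz hn, nsB_nonneg _ _ _ hz hn, Finsupp.single_add, ← Finsupp.smul_single,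
          ← Finsupp.smul_single]
        module
      rw [List.foldl_cons, key, wFold_add, wFold_smul, wFold_smul, map_add, map_smul, map_smul,
        ih n hn _ hzs', ih (z + n) (by omega) _ hzs']
      simp
  | cons y w ih =>
    have := wK_Y l e _ ih y
    simpa only [map_sub, wY_single, List.cons_append] using this

noncomputable def wf (l : ℂ) (e : ℤ → V →ₗ[ℂ] V) : V →ₗ[ℂ] (List ℤ → V) where
  toFun v u := wPhi l e (Finsupp.single u v)
  map_add' v v' := by ext u; simp [Finsupp.single_add]
  map_smul' c v := by ext u; simp [← Finsupp.smul_single]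

/-- the big coinduced space -/
def wW (V : Type) [AddCommGroup V] [Module ℂ V] (l : ℂ) : Submodule ℂ (List ℤ → V) where
  carrier := {f | ∀ a b x y, f (a ++ x :: y :: b) = nsS x y • f (a ++ y :: x :: b) +
    nsA x y • f (a ++ (x + y) :: b) + nsB l x y • f (a ++ b)}
  add_mem' := by
    intro f g hf hg a b x y
    simp only [Pi.add_apply]
    rw [hf, hg]; module
  zero_mem' := by intro a b x y; simp
  smul_mem' := by
    intro c f hf a b x y
    simp only [Pi.smul_apply]
    rw [hf]; module

lemma wf_mem (l : ℂ) (e : ℤ → V →ₗ[ℂ] V) (he : IsBE e) (v : V) : wf l e v ∈ wW V l := by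
  intro a b x y
  have : wK l e (Finsupp.single (a ++ x :: y :: b) v - nsS x y • Finsupp.single (a ++ y :: x :: b) v
      - nsA x y • Finsupp.single (a ++ (x + y) :: b) v - nsB l x y • Finsupp.single (a ++ b) v) := by
    induction a with
    | nil =>
      have := wK_rel l e he x y (Finsupp.single b v)
      simpa only [wRel, wY_single, List.nil_append] using this
    | cons z a ih =>
      have := wK_Y l e _ ih z
      simpa only [map_sub, map_smul, wY_single, List.cons_append] using this
  have := this [] (by simp)
  simp only [List.foldl_nil, map_sub, map_smul] at this
  simp only [wf, LinearMap.coe_mk, AddHom.coe_mk]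
  linear_combination (norm := module) this

def wE (l : ℂ) (n : ℤ) : wW V l →ₗ[ℂ] wW V l where
  toFun f := ⟨fun u => f.1 (u ++ [n]), by
    intro a b x y
    have := f.2 a (b ++ [n]) x y
    simpa using this⟩
  map_add' f g := rfl
  map_smul' c f := rfl

lemma wE_rel (l : ℂ) (a b : ℤ) (f : wW V l) :
    wE l a (wE l b f) = nsS a b • wE l b (wE l a f) + nsA a b • wE l (a + b) f + nsB l a b • f := by
  apply Subtype.ext
  funext u
  have := f.2 u [] a b
  simpa [wE] using this

end construct

noncomputable def bE (V : BRep) (n : ℤ) : V.carrier →ₗ[ℂ] V.carrier :=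
  if Even n then V.L (n / 2).toNat else V.G ((n - 1) / 2).toNat

noncomputable def nE (M : NSRep) (n : ℤ) : M.carrier →ₗ[ℂ] M.carrier :=
  if Even n then M.L (n / 2) else M.G ((n + 1) / 2)

lemma not_even_two_mul_add_one' (a : ℤ) : ¬ Even (2 * a + 1) := by
  rw [Int.not_even_iff_odd]; exact odd_two_mul_add_one a

lemma nE_L (M : NSRep) (m : ℤ) : nE M (2 * m) = M.L m := by
  rw [nE, if_pos (even_two_mul m)]; congr 1; omega

lemma nE_G' (M : NSRep) (j : ℤ) : nE M (2 * j + 1) = M.G (j + 1) := by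
  rw [nE, if_neg (not_even_two_mul_add_one' j)]; congr 1; omega

lemma nE_G (M : NSRep) (j : ℤ) : nE M (2 * j - 1) = M.G j := by
  rw [show 2 * j - 1 = 2 * (j - 1) + 1 by ring, nE_G', sub_add_cancel]

lemma bE_L (V : BRep) (m : ℕ) : bE V (2 * m) = V.L m := by
  rw [bE, if_pos (even_two_mul _)]; congr 1; omega

lemma bE_G (V : BRep) (j : ℕ) : bE V (2 * j + 1) = V.G j := by
  rw [bE, if_neg (not_even_two_mul_add_one' j)]; congr 1; omega

lemma nat_cases (n : ℤ) (hn : 0 ≤ n) : (∃ m : ℕ, n = 2 * m) ∨ ∃ m : ℕ, n = 2 * m + 1 := by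
  rcases Int.even_or_odd' n with ⟨k, h | h⟩
  · exact Or.inl ⟨k.toNat, by omega⟩
  · exact Or.inr ⟨k.toNat, by omega⟩

lemma bE_isBE (V : BRep) : IsBE (bE V) := by
  intro x y hx hy v
  rcases nat_cases x hx with ⟨a, rfl⟩ | ⟨a, rfl⟩ <;> rcases nat_cases y hy with ⟨b, rfl⟩ | ⟨b, rfl⟩
  · rw [show (2 * (a:ℤ) + 2 * b) = 2 * ((a + b : ℕ) : ℤ) by push_cast; ring]
    simp only [bE_L]
    have := V.rel_LL a b v
    simp only [nsS, nsA, even_two_mul, if_true]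
    push_cast
    linear_combination (norm := module) this
  · rw [show (2 * (a:ℤ) + (2 * b + 1)) = 2 * ((a + b : ℕ) : ℤ) + 1 by push_cast; ring]
    simp only [bE_L, bE_G]
    have := V.rel_LG a b v
    simp only [nsS, nsA, even_two_mul, not_even_two_mul_add_one', if_true, if_false]
    push_cast
    linear_combination (norm := module) this
  · rw [show (2 * (a:ℤ) + 1 + 2 * b) = 2 * ((b + a : ℕ) : ℤ) + 1 by push_cast; ring]
    simp only [bE_L, bE_G]
    have := V.rel_LG b a v
    simp only [nsS, nsA, even_two_mul, not_even_two_mul_add_one', if_true, if_false]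
    push_cast
    linear_combination (norm := module) -this
  · rw [show (2 * (a:ℤ) + 1 + (2 * b + 1)) = 2 * ((a + b + 1 : ℕ) : ℤ) by push_cast; ring]
    simp only [bE_L, bE_G]
    have := V.rel_GG a b v
    simp only [nsS, nsA, not_even_two_mul_add_one', if_false]
    linear_combination (norm := module) this

lemma nE_rel (M : NSRep) (l : ℂ) (hM : M.HasCentralCharge l) (x y : ℤ) (v : M.carrier) :
    nE M x (nE M y v) = nsS x y • nE M y (nE M x v) + nsA x y • nE M (x + y) v
      + nsB l x y • v := by
  rcases Int.even_or_odd' x with ⟨a, rfl | rfl⟩ <;> rcases Int.even_or_odd' y with ⟨b, rfl | rfl⟩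
  · rw [show (2 * a + 2 * b) = 2 * (a + b) by ring]
    simp only [nE_L]
    have := M.rel_LL a b v
    rw [hM v] at this
    have hc : (2 * a + 2 * b = 0) ↔ a + b = 0 := by omega
    simp only [nsS, nsA, nsB, even_two_mul, if_true, hc]
    push_cast
    split_ifs at this ⊢ <;> linear_combination (norm := module) this
  · rw [show (2 * a + (2 * b + 1)) = 2 * (a + b) + 1 by ring]
    simp only [nE_L, nE_G']
    have := M.rel_LG a (b + 1) v
    rw [← add_assoc] at this
    simp only [nsS, nsA, nsB, even_two_mul, not_even_two_mul_add_one', if_true, if_false]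
    rw [if_neg (by omega)]
    push_cast at this ⊢
    linear_combination (norm := module) this
  · rw [show (2 * a + 1 + 2 * b) = 2 * (b + a) + 1 by ring]
    simp only [nE_L, nE_G']
    have := M.rel_LG b (a + 1) v
    rw [← add_assoc] at this
    simp only [nsS, nsA, nsB, even_two_mul, not_even_two_mul_add_one', if_true, if_false]
    rw [if_neg (by omega)]
    push_cast at this ⊢
    linear_combination (norm := module) -this
  · rw [show (2 * a + 1 + (2 * b + 1)) = 2 * (a + b + 1) by ring]
    simp only [nE_L, nE_G']
    have := M.rel_GG (a + 1) (b + 1) v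
    rw [hM v, show a + 1 + (b + 1) - 1 = a + b + 1 by ring] at this
    have hc : (2 * a + 1 + (2 * b + 1) = 0) ↔ a + 1 + (b + 1) = 1 := by omega
    simp only [nsS, nsA, nsB, not_even_two_mul_add_one', if_false, hc]
    push_cast at this ⊢
    split_ifs at this ⊢ <;> linear_combination (norm := module) this

lemma bE_lin (V : BRep) (M : NSRep) (i : V.carrier →ₗ[ℂ] M.carrier) (hi : IsBLinear V M i)
    (n : ℤ) (hn : 0 ≤ n) (v : V.carrier) : nE M n (i v) = i (bE V n v) := by
  rcases nat_cases n hn with ⟨a, rfl⟩ | ⟨a, rfl⟩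
  · rw [nE_L, bE_L, hi.1]
  · rw [nE_G', bE_G, hi.2]

lemma odd_two_mul_sub_one' (a : ℤ) : ¬ Even (2 * a - 1) := by
  rw [show 2 * a - 1 = 2 * (a - 1) + 1 by ring]; exact not_even_two_mul_add_one' _

noncomputable def wRep (V : BRep) (l : ℂ) : NSRep where
  carrier := wW V.carrier l
  L m := wE l (2 * m)
  G j := wE l (2 * j - 1)
  C := l • LinearMap.id
  commC_L m v := by simp
  commC_G m v := by simp
  rel_LL a b v := by
    have := wE_rel l (2 * a) (2 * b) v
    have hc : (2 * a + 2 * b = 0) ↔ a + b = 0 := by omega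
    simp only [nsS, nsA, nsB, even_two_mul, if_true, hc] at this
    rw [show (2 * a + 2 * b) = 2 * (a + b) by ring] at this
    simp only [LinearMap.smul_apply, LinearMap.id_apply]
    push_cast at this
    split_ifs at this ⊢ <;> linear_combination (norm := module) this
  rel_LG a b v := by
    have := wE_rel l (2 * a) (2 * b - 1) v
    simp only [nsS, nsA, nsB, even_two_mul, odd_two_mul_sub_one', if_true, if_false] at this
    rw [if_neg (by omega), show (2 * a + (2 * b - 1)) = 2 * (a + b) - 1 by ring] at this
    push_cast at this
    linear_combination (norm := module) this
  rel_GG a b v := by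
    have := wE_rel l (2 * a - 1) (2 * b - 1) v
    have hc : (2 * a - 1 + (2 * b - 1) = 0) ↔ a + b = 1 := by omega
    simp only [nsS, nsA, nsB, odd_two_mul_sub_one', if_false, hc] at this
    rw [show (2 * a - 1 + (2 * b - 1)) = 2 * (a + b - 1) by ring] at this
    simp only [LinearMap.smul_apply, LinearMap.id_apply]
    push_cast at this
    split_ifs at this ⊢ <;> linear_combination (norm := module) this

noncomputable def wIota (V : BRep) (l : ℂ) : V.carrier →ₗ[ℂ] (wRep V l).carrier :=
  LinearMap.codRestrict (wW V.carrier l) (wf l (bE V)) (wf_mem l (bE V) (bE_isBE V))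

lemma wIota_E (V : BRep) (l : ℂ) (n : ℤ) (hn : 0 ≤ n) (v : V.carrier) :
    wIota V l (bE V n v) = wE l n (wIota V l v) := by
  apply Subtype.ext
  funext u
  have := wK_q l (bE V) (bE_isBE V) n hn u v [] (by simp)
  simp only [List.foldl_nil, map_sub, sub_eq_zero] at this
  exact this.symm

lemma wIota_lin (V : BRep) (l : ℂ) : IsBLinear V (wRep V l) (wIota V l) := by
  refine ⟨fun m v => ?_, fun j v => ?_⟩
  · rw [← bE_L, wIota_E _ _ _ (by omega)]; rfl
  · rw [← bE_G, wIota_E _ _ _ (by omega), show (2 * (j:ℤ) + 1) = 2 * ((j:ℤ) + 1) - 1 by ring]; rfl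

lemma wIota_inj (V : BRep) (l : ℂ) (v : V.carrier) (h : wIota V l v = 0) : v = 0 := by
  have h1 : (wIota V l v).1 [] = 0 := by rw [h]; rfl
  have h2 : (wIota V l v).1 [] = v := wPhi_nil l (bE V) v
  rw [← h2, h1]

lemma bE_van (V : BRep) (hV : V.IsSimple) (t : ℕ) (ht : 0 < t)
    (hvan : ∀ i : ℕ, t < i → ∀ v : V.carrier, V.L i v = 0) (n : ℤ) (hn : 2 * (t:ℤ) < n)
    (v : V.carrier) : bE V n v = 0 := by
  have h1 : ∀ j : ℕ, t < j → ∀ v, V.G j v = 0 := by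
    intro j hj v
    have := V.rel_LG j 0 v
    rw [hvan j hj, hvan j hj, map_zero, sub_zero, add_zero] at this
    rcases smul_eq_zero.1 this.symm with h | h
    · exfalso
      have h' : ((j:ℤ) : ℂ) = ((1 : ℤ) : ℂ) := by push_cast at h ⊢; linear_combination 2 * h
      have := Int.cast_injective h'
      omega
    · exact h
  have h2 : ∀ v, V.G t v = 0 := by
    have hinv : V.Invariant (LinearMap.ker (V.G t)) := by
      refine ⟨fun m v hv => ?_, fun j v hv => ?_⟩
      · rw [LinearMap.mem_ker] at hv ⊢
        have := V.rel_LG m t v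
        have h0 : V.G (m + t) v = 0 := by
          rcases Nat.eq_zero_or_pos m with rfl | hm
          · rwa [zero_add]
          · exact h1 _ (by omega) v
        rw [hv, h0, map_zero, smul_zero, zero_sub, neg_eq_zero] at this
        exact this
      · rw [LinearMap.mem_ker] at hv ⊢
        have := V.rel_GG t j v
        rw [hv, map_zero, hvan _ (by omega), smul_zero, add_zero] at this
        exact this
    rcases hV.2 _ hinv with h | h
    · exfalso
      obtain ⟨v, hv⟩ := hV.1
      apply hv
      have := V.rel_GG t t v
      rw [hvan _ (by omega), smul_zero, ← two_smul ℂ, smul_eq_zero] at this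
      have := this.resolve_left two_ne_zero
      rw [LinearMap.ker_eq_bot'] at h
      exact h _ (h _ this)
    · intro v
      have : v ∈ LinearMap.ker (V.G t) := by rw [h]; trivial
      exact this
  rcases nat_cases n (by omega) with ⟨a, rfl⟩ | ⟨a, rfl⟩
  · rw [bE_L]; exact hvan a (by omega) v
  · rw [bE_G]
    rcases (show t ≤ a by omega).eq_or_lt with rfl | h
    · exact h2 v
    · exact h1 a h v

/-- quotient of a module by an invariant subspace -/
noncomputable def qRep (M : NSRep) (p : Submodule ℂ M.carrier) (hp : M.Invariant p) : NSRep where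
  carrier := M.carrier ⧸ p
  L m := p.mapQ p (M.L m) (hp.1 m)
  G j := p.mapQ p (M.G j) (hp.2.1 j)
  C := p.mapQ p M.C hp.2.2
  commC_L m v := by
    obtain ⟨v, rfl⟩ := p.mkQ_surjective v
    simp only [Submodule.mkQ_apply, Submodule.mapQ_apply, M.commC_L]
  commC_G m v := by
    obtain ⟨v, rfl⟩ := p.mkQ_surjective v
    simp only [Submodule.mkQ_apply, Submodule.mapQ_apply, M.commC_G]
  rel_LL a b v := by
    obtain ⟨v, rfl⟩ := p.mkQ_surjective v
    simp only [Submodule.mkQ_apply, Submodule.mapQ_apply, ← Submodule.Quotient.mk_sub, M.rel_LL,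
      Submodule.Quotient.mk_add, Submodule.Quotient.mk_smul]
  rel_LG a b v := by
    obtain ⟨v, rfl⟩ := p.mkQ_surjective v
    simp only [Submodule.mkQ_apply, Submodule.mapQ_apply, ← Submodule.Quotient.mk_sub, M.rel_LG,
      Submodule.Quotient.mk_smul]
  rel_GG a b v := by
    obtain ⟨v, rfl⟩ := p.mkQ_surjective v
    simp only [Submodule.mkQ_apply, Submodule.mapQ_apply, ← Submodule.Quotient.mk_add, M.rel_GG]
    simp only [Submodule.Quotient.mk_add, Submodule.Quotient.mk_smul]

lemma induced_gen (l : ℂ) (V : BRep) (M : NSRep) (i : V.carrier →ₗ[ℂ] M.carrier)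
    (h : IsInduced l V M i) (p : Submodule ℂ M.carrier) (hp : M.Invariant p)
    (hi : ∀ v, i v ∈ p) : p = ⊤ := by
  obtain ⟨hb, hc, hu⟩ := h
  obtain ⟨F, -, hF⟩ := hu (qRep M p hp) (by
    intro v
    obtain ⟨v, rfl⟩ := p.mkQ_surjective v
    change p.mapQ p M.C hp.2.2 (p.mkQ v) = l • p.mkQ v
    simp only [Submodule.mkQ_apply, Submodule.mapQ_apply, hc v, Submodule.Quotient.mk_smul])
    (0 : V.carrier →ₗ[ℂ] (M.carrier ⧸ p)) ⟨fun _ _ => ((map_zero _).symm), fun _ _ => (map_zero _).symm⟩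
  have h1 := hF (0 : M.carrier →ₗ[ℂ] (M.carrier ⧸ p))
    ⟨⟨fun _ _ => (map_zero _).symm, fun _ _ => (map_zero _).symm, fun _ => (map_zero _).symm⟩,
      LinearMap.zero_comp _⟩
  have h2 := hF p.mkQ ⟨⟨fun _ _ => rfl, fun _ _ => rfl, fun _ => rfl⟩, by
    apply LinearMap.ext
    intro v
    exact (Submodule.Quotient.mk_eq_zero p).2 (hi v)⟩
  rw [← Submodule.ker_mkQ p]
  have h3 : p.mkQ = 0 := h2.trans h1.symm
  rw [h3, LinearMap.ker_zero]

theorem induced_module_simple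
    (V : BRep) (hV : V.IsSimple) (t : ℕ) (ht : 0 < t)
    (hinj : Function.Injective (V.L t))
    (hvan : ∀ i : ℕ, t < i → ∀ v : V.carrier, V.L i v = 0) :
    ∀ (ℓ : ℂ) (M : NSRep) (ι : V.carrier →ₗ[ℂ] M.carrier),
      IsInduced ℓ V M ι → M.IsSimple := by
  intro l M i hI
  have hcc := hI.2.1
  have hi0 : ∀ v, i v = 0 → v = 0 := by
    obtain ⟨F, ⟨_, hF⟩, _⟩ := hI.2.2 (wRep V l) (fun v => rfl) (wIota V l) (wIota_lin V l)
    intro v hv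
    apply wIota_inj V l
    rw [← hF, LinearMap.comp_apply, hv, map_zero]
  have H : NsSetup l (2 * (t:ℤ)) (nE M) i (bE V) :=
    { rel := nE_rel M l hcc
      hi := bE_lin V M i hI.1
      van := fun n hn v => bE_van V hV t ht hvan n hn v
      hT := even_two_mul _
      hT2 := by omega
      inj := by rw [bE_L]; exact hinj }
  have hrange : LinearMap.range (evP (nE M) i) = ⊤ := by
    apply induced_gen l V M i hI
    · refine ⟨fun m v hv => ?_, fun j v hv => ?_, fun v hv => ?_⟩
      · rw [← nE_L]; exact H.range_inv _ _ hv
      · rw [← nE_G]; exact H.range_inv _ _ hv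
      · rw [hcc v]; exact Submodule.smul_mem _ _ hv
    · intro v
      exact ⟨Finsupp.single [] v, evP_single _ _ _ _⟩
  refine ⟨?_, fun p hp => ?_⟩
  · obtain ⟨v, hv⟩ := hV.1
    exact ⟨i v, fun h => hv (hi0 v h)⟩
  · have hpE : ∀ n, ∀ x ∈ p, nE M n x ∈ p := by
      intro n x hx
      unfold nE
      split_ifs
      · exact hp.1 _ _ hx
      · exact hp.2.1 _ _ hx
    have hinv : V.Invariant (p.comap i) := by
      refine ⟨fun m v hv => ?_, fun j v hv => ?_⟩
      · rw [Submodule.mem_comap, hI.1.1]; exact hp.1 _ _ hv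
      · rw [Submodule.mem_comap, hI.1.2]; exact hp.2.1 _ _ hv
    rcases hV.2 _ hinv with h | h
    · left
      rw [eq_bot_iff]
      intro x hx
      obtain ⟨d, hd⟩ := evP_exists (E := nE M) (i := i) x (by rw [hrange]; trivial)
      have := H.inter p (fun n _ => hpE n) (fun v hv => by
        have : v ∈ p.comap i := hv
        rw [h] at this
        simpa using this) d x hx hd
      simpa using this
    · right
      apply induced_gen l V M i hI p hp
      intro v
      have : v ∈ p.comap i := by rw [h]; trivial
      exact this
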